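/- arXiv:1301.6772 — 2 statements merged into one kernel-verified Lean document; each statement's English description precedes it below -/
import Mathlib

section
/- For any ε > 0 there is a constant K (depending only on A, m, n, ε) such that for every integer q ≥ 1 and every tuple of integers a = (a_{ij})_{1≤i≤j≤m} with gcd(q, a_{11}, a_{12}, …, a_{mm}) = 1, one has |S_{a,q}(b)| ≤ K·q^{mn − n/(2R) + ε}, uniformly in b. -/
open scoped BigOperators
open MeasureTheory Matrix Filter

noncomputable section

/-- Index type for pairs `(i,j)` with `i ≤ j` (the `R = m(m+1)/2` upper-triangular positions). -/
abbrev Idx (m : ℕ) : Type := {p : Fin m × Fin m // p.1 ≤ p.2}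

instance idxNonempty (m : ℕ) [NeZero m] : Nonempty (Idx m) :=
  ⟨⟨(0, 0), le_rfl⟩⟩

/-- `e(z) = exp(2πiz)` -/
def eR (z : ℝ) : ℂ := Complex.exp (2 * Real.pi * Complex.I * z)

/-- `xᵢᵀ A xⱼ` for integer vectors. -/
def quadZ {m n : ℕ} (A : Matrix (Fin n) (Fin n) ℤ) (x : Fin m → Fin n → ℤ)
    (i j : Fin m) : ℤ :=
  ∑ s, ∑ t, x i s * A s t * x j t

/-- `vᵢᵀ A vⱼ` for real vectors. -/
def quadR {m n : ℕ} (A : Matrix (Fin n) (Fin n) ℤ) (v : Fin m → Fin n → ℝ)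
    (i j : Fin m) : ℝ :=
  ∑ s, ∑ t, v i s * (A s t : ℝ) * v j t

/-- The tuple `b = (B_{ij})_{1 ≤ i ≤ j ≤ m}`. -/
def bvec {m : ℕ} (B : Matrix (Fin m) (Fin m) ℤ) (p : Idx m) : ℤ := B p.1.1 p.1.2

/-- `γ_i`, defined by `B₁₁ = B_{ii}^{γ_i}`, i.e. `γ_i = log B₁₁ / log B_{ii}`. -/
def gamI {m : ℕ} [NeZero m] (B : Matrix (Fin m) (Fin m) ℤ) (i : Fin m) : ℝ :=
  Real.log ((B 0 0 : ℤ) : ℝ) / Real.log ((B i i : ℤ) : ℝ)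

/-- `γ = Σ 1/γ_i`. -/
def gamT {m : ℕ} [NeZero m] (B : Matrix (Fin m) (Fin m) ℤ) : ℝ :=
  ∑ i, (gamI B i)⁻¹

/-- `P_i = C^{1/γ_i} B_{ii}^{1/2}`. -/
def PP {m : ℕ} [NeZero m] (C : ℝ) (B : Matrix (Fin m) (Fin m) ℤ) (i : Fin m) : ℝ :=
  C ^ (gamI B i)⁻¹ * ((B i i : ℤ) : ℝ) ^ ((1 : ℝ) / 2)

/-- `Π = ∏ P_i`. -/
def PiP {m : ℕ} [NeZero m] (C : ℝ) (B : Matrix (Fin m) (Fin m) ℤ) : ℝ :=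
  ∏ i, PP C B i

/-- The box of integer tuples `(x₁,…,x_m)` with `|x_i| ≤ P_i` (max-norm). -/
def box (m n : ℕ) [NeZero m] (C : ℝ) (B : Matrix (Fin m) (Fin m) ℤ) :
    Finset (Fin m → Fin n → ℤ) :=
  Finset.Icc (fun i _ => -⌊PP C B i⌋) (fun i _ => ⌊PP C B i⌋)

/-- The exponential sum `S(α, b)`. -/
def Ssum {m n : ℕ} [NeZero m] (A : Matrix (Fin n) (Fin n) ℤ) (C : ℝ)
    (B : Matrix (Fin m) (Fin m) ℤ) (α : Idx m → ℝ) (b : Idx m → ℤ) : ℂ :=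
  ∑ x ∈ box m n C B,
    eR (∑ p : Idx m, α p * ((quadZ A x p.1.1 p.1.2 - b p : ℤ) : ℝ))

/-- The complete exponential sum `S_{a,q}(b)`. -/
def Saq {m n : ℕ} (A : Matrix (Fin n) (Fin n) ℤ) (q : ℤ) (a b : Idx m → ℤ) : ℂ :=
  ∑ z ∈ (Finset.Icc (fun _ _ => 0) (fun _ _ => q - 1) : Finset (Fin m → Fin n → ℤ)),
    eR ((∑ p : Idx m, (a p : ℝ) * ((quadZ A z p.1.1 p.1.2 - b p : ℤ) : ℝ)) / (q : ℝ))

/-- Residue tuples `a (mod q)` with `gcd(q, a) = 1`. -/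
def resid (m : ℕ) (q : ℤ) : Finset (Idx m → ℤ) :=
  (Finset.Icc (fun _ => 0) (fun _ => q - 1)).filter fun a =>
    Int.gcd q (Finset.univ.gcd a) = 1

/-- The `q`-th term of the singular series. -/
def STerm {m n : ℕ} (A : Matrix (Fin n) (Fin n) ℤ) (B : Matrix (Fin m) (Fin m) ℤ)
    (q : ℕ) : ℂ :=
  ((q : ℂ) ^ (m * n))⁻¹ * ∑ a ∈ resid m (q : ℤ), Saq A (q : ℤ) a (bvec B)

/-- The truncated singular series `𝔖(Q; b)`. -/
def SingT {m n : ℕ} (A : Matrix (Fin n) (Fin n) ℤ) (B : Matrix (Fin m) (Fin m) ℤ)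
    (Q : ℝ) : ℂ :=
  ∑ q ∈ Finset.Icc 1 ⌊Q⌋₊, STerm A B q

/-- The singular series `𝔖(b) = Σ_{q=1}^∞ q^{-mn} Σ_{a mod q, (a,q)=1} S_{a,q}(b)`. -/
def Sing {m n : ℕ} (A : Matrix (Fin n) (Fin n) ℤ) (B : Matrix (Fin m) (Fin m) ℤ) : ℂ :=
  ∑' q : ℕ, STerm A B q

/-- The oscillatory integral `I` with weights `w_p`;
`I(P,β)` is obtained with `w_p = P_iP_jβ_{ij}` and `I(η)` with `w = η`. -/
def Iint {m n : ℕ} (A : Matrix (Fin n) (Fin n) ℤ) (w : Idx m → ℝ) : ℂ :=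
  ∫ v in (Set.univ.pi fun _ : Fin m => Set.univ.pi fun _ : Fin n => Set.Icc (-1 : ℝ) 1),
    eR (∑ p : Idx m, w p * quadR A v p.1.1 p.1.2)

/-- The truncated singular integral `𝔍(Q; c)`. -/
def JintT {m n : ℕ} (A : Matrix (Fin n) (Fin n) ℤ) (Q : ℝ) (c : Idx m → ℝ) : ℂ :=
  ∫ η in (Set.univ.pi fun _ : Idx m => Set.Icc (-Q) Q),
    Iint (n := n) A η * eR (-(∑ p : Idx m, η p * c p))

/-- The singular integral `𝔍(c)`. -/
def Jint {m n : ℕ} (A : Matrix (Fin n) (Fin n) ℤ) (c : Idx m → ℝ) : ℂ :=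
  ∫ η : Idx m → ℝ, Iint (n := n) A η * eR (-(∑ p : Idx m, η p * c p))

/-- The major arc `M_{a,q}(Δ)` (with constant `c₀`). -/
def MArc {m : ℕ} [NeZero m] (C : ℝ) (B : Matrix (Fin m) (Fin m) ℤ) (c₀ Δ : ℝ)
    (q : ℤ) (a : Idx m → ℤ) : Set (Idx m → ℝ) :=
  {α | (∀ p, 0 ≤ α p ∧ α p < 1) ∧
    ∀ p : Idx m, |(q : ℝ) * α p - (a p : ℝ)| ≤
      c₀ * PiP C B ^ Δ * (PP C B p.1.1 * PP C B p.1.2)⁻¹}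

/-- The enlarged major arc `M'_{a,q}(Δ)` (with constant `c₀`). -/
def MArc' {m : ℕ} [NeZero m] (C : ℝ) (B : Matrix (Fin m) (Fin m) ℤ) (c₀ Δ : ℝ)
    (q : ℤ) (a : Idx m → ℤ) : Set (Idx m → ℝ) :=
  {α | (∀ p, 0 ≤ α p ∧ α p < 1) ∧
    ∀ p : Idx m, |(q : ℝ) * α p - (a p : ℝ)| ≤
      c₀ * (q : ℝ) * PiP C B ^ Δ * (PP C B p.1.1 * PP C B p.1.2)⁻¹}

/-- Admissible pairs `(q, a)`: `1 ≤ q ≤ c₀Π^Δ`, `0 ≤ a_{ij} < q`, `gcd(q,a) = 1`. -/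
def validAQ {m : ℕ} [NeZero m] (C : ℝ) (B : Matrix (Fin m) (Fin m) ℤ) (c₀ Δ : ℝ)
    (q : ℤ) (a : Idx m → ℤ) : Prop :=
  1 ≤ q ∧ (q : ℝ) ≤ c₀ * PiP C B ^ Δ ∧ (∀ p, 0 ≤ a p ∧ a p < q) ∧
    Int.gcd q (Finset.univ.gcd a) = 1

/-- The major arcs `M(Δ)`. -/
def MSet {m : ℕ} [NeZero m] (C : ℝ) (B : Matrix (Fin m) (Fin m) ℤ) (c₀ Δ : ℝ) :
    Set (Idx m → ℝ) :=
  ⋃ q : ℤ, ⋃ a : Idx m → ℤ, ⋃ _ : validAQ C B c₀ Δ q a, MArc C B c₀ Δ q a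

/-- `N(A,B)`: the number of integral representations of `B` by `A`. -/
def NAB (m n : ℕ) (A : Matrix (Fin n) (Fin n) ℤ) (B : Matrix (Fin m) (Fin m) ℤ) : ℕ :=
  Nat.card {X : Matrix (Fin n) (Fin m) ℤ | Xᵀ * A * X = B}

/-- `#{X mod q : XᵀAX ≡ B (mod q)}`. -/
def locCount (m n : ℕ) (A : Matrix (Fin n) (Fin n) ℤ) (B : Matrix (Fin m) (Fin m) ℤ)
    (q : ℕ) : ℕ :=
  Nat.card {X : Matrix (Fin n) (Fin m) (ZMod q) |
    Xᵀ * A.map ((↑) : ℤ → ZMod q) * X = B.map ((↑) : ℤ → ZMod q)}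

/-- The archimedean density `α_∞(A,B)`. -/
def alphaInf (m n : ℕ) (A : Matrix (Fin n) (Fin n) ℤ)
    (B : Matrix (Fin m) (Fin m) ℤ) : ℝ :=
  ((A.det : ℤ) : ℝ) ^ (-(m : ℝ) / 2) * ((B.det : ℤ) : ℝ) ^ (((n : ℝ) - m - 1) / 2) *
    Real.pi ^ ((m : ℝ) * (2 * (n : ℝ) - m + 1) / 4) *
    ∏ j ∈ Finset.Ioc (n - m) n, (Real.Gamma ((j : ℝ) / 2))⁻¹

/-- `max_{1≤i≤j≤m} |η_{ij}|`. -/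
def maxAbs {m : ℕ} [NeZero m] (η : Idx m → ℝ) : ℝ := ⨆ p : Idx m, |η p|

/-
Up to a unimodular factor, `S_{a,q}(b)` is the sum over matrices `z` modulo `q` of
`e(tr (T z A zᵀ) / q)`, where `T` is triangular with the entries of `a`. Weyl differencing bounds
its square by `q ^ (m * n)` times the number of `w` modulo `q` with `(T + Tᵀ) w A = 0`. Each of the
`n` columns of such a `w` is killed by `M = det A • (T + Tᵀ)`. The order of the image of `M`
annihilates `M`, so when `gcd(q, a) = 1` it is at least `q / |2 det A|`, and each column has at most
`|2 det A| q ^ (m - 1)` choices. This gives the exponent `mn - n / 2`, which is at most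
`mn - n / (2R)`.
-/

section QuadraticPhase

variable {G : Type*} [AddCommGroup G] [Fintype G] {f : G → ℂ} {χ : G → AddChar G ℂ}

lemma sum_mul_conj_sum_eq_sum_mul_sum_addChar (hf : ∀ z, ‖f z‖ = 1)
    (hfχ : ∀ w z, f (w + z) = f w * f z * χ w z) :
    (∑ z, f z) * starRingEnd ℂ (∑ z, f z) = ∑ w, f w * ∑ z, χ w z := by
  have hconj (z : G) : f z * starRingEnd ℂ (f z) = 1 := by
    simp [Complex.mul_conj', hf]
  have hshift (z : G) : (∑ w, f w) * starRingEnd ℂ (f z) = ∑ w, f w * χ w z := by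
    rw [← Equiv.sum_comp (Equiv.addRight z) f, Finset.sum_mul]
    refine Finset.sum_congr rfl fun w _ => ?_
    rw [Equiv.coe_addRight, hfχ]
    linear_combination f w * χ w z * hconj z
  simp_rw [map_sum, Finset.mul_sum, hshift]
  exact Finset.sum_comm

lemma norm_sum_sq_le_card_mul_card_addChar_eq_zero (hf : ∀ z, ‖f z‖ = 1)
    (hfχ : ∀ w z, f (w + z) = f w * f z * χ w z) :
    ‖∑ z, f z‖ ^ 2 ≤ (Nat.card G : ℝ) * Nat.card {w // χ w = 0} := by
  classical
  have hterm (w : G) : ‖f w * ∑ z, χ w z‖ = Nat.card G * if χ w = 0 then 1 else 0 := by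
    rw [norm_mul, hf, one_mul, AddChar.sum_eq_ite, Nat.card_eq_fintype_card]
    split_ifs <;> simp
  calc ‖∑ z, f z‖ ^ 2
      = ‖∑ w, f w * ∑ z, χ w z‖ := by
        rw [← sum_mul_conj_sum_eq_sum_mul_sum_addChar hf hfχ, norm_mul, RCLike.norm_conj, sq]
    _ ≤ ∑ w, ‖f w * ∑ z, χ w z‖ := norm_sum_le _ _
    _ = Nat.card G * Nat.card {w // χ w = 0} := by
        simp_rw [hterm, ← Finset.mul_sum, Finset.sum_boole, Nat.card_eq_fintype_card,
          Fintype.card_subtype]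

end QuadraticPhase

lemma card_ker_mul_le {G H : Type*} [AddGroup G] [Finite G] [AddGroup H] (f : G →+ H)
    {c D : ℕ} (hD : D ≠ 0) (h : ∀ k : ℕ, (∀ x, k • f x = 0) → c ∣ k * D) :
    Nat.card f.ker * c ≤ D * Nat.card G := by
  have : Finite f.range := Finite.of_surjective _ f.rangeRestrict_surjective
  have hdvd : c ∣ Nat.card f.range * D :=
    h _ fun x => congrArg Subtype.val (card_nsmul_eq_zero' (x := f.rangeRestrict x))
  have hle : c ≤ Nat.card f.range * D :=
    Nat.le_of_dvd (Nat.mul_pos Nat.card_pos hD.bot_lt) hdvd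
  have hcard : Nat.card f.ker * Nat.card f.range = Nat.card G := by
    rw [← AddSubgroup.index_ker, AddSubgroup.card_mul_index]
  calc Nat.card f.ker * c
      ≤ Nat.card f.ker * (Nat.card f.range * D) := by gcongr
    _ = D * Nat.card G := by rw [← hcard]; ring

section MatrixGaussSum

variable {ι κ R : Type*} [Fintype ι] [Fintype κ] [CommRing R]

lemma eq_zero_of_forall_addChar_trace_mul_eq_one {S : Type*} [CommMonoid S]
    {ψ : AddChar R S} (hψ : ψ.IsPrimitive) {M : Matrix ι κ R}
    (h : ∀ z : Matrix κ ι R, ψ (M * z).trace = 1) : M = 0 := by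
  classical
  ext i j
  by_contra hij
  refine hψ hij (DFunLike.ext _ _ fun r => ?_)
  simpa [Matrix.trace_mul_single] using h (Matrix.single j i r)

lemma trace_mul_add_mul_mul_transpose_add (T : Matrix ι ι R) {A : Matrix κ κ R} (hA : A.IsSymm)
    (w z : Matrix ι κ R) :
    (T * ((w + z) * A * (w + z)ᵀ)).trace =
      (T * (w * A * wᵀ)).trace + (T * (z * A * zᵀ)).trace + ((T + Tᵀ) * w * A * zᵀ).trace := by
  have hflip : (T * (z * A * wᵀ)).trace = (Tᵀ * (w * A * zᵀ)).trace := by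
    rw [← Matrix.trace_transpose, Matrix.trace_mul_comm]
    simp [Matrix.mul_assoc, hA.eq]
  simp only [Matrix.transpose_add, Matrix.mul_add, Matrix.add_mul, Matrix.trace_add, hflip]
  simp only [Matrix.mul_assoc]
  ring

lemma card_mulVec_eq_zero_mul_le [Finite R] (M : Matrix ι ι R) {c D : ℕ} (hD : D ≠ 0)
    (h : ∀ k : ℕ, k • M = 0 → c ∣ k * D) :
    Nat.card {v // M *ᵥ v = 0} * c ≤ D * Nat.card R ^ Fintype.card ι := by
  classical
  have hker := card_ker_mul_le M.mulVecLin.toAddMonoidHom hD fun k hk => h k <|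
    Matrix.ext_of_mulVec_single fun i => by
      rw [Matrix.smul_mulVec, Matrix.zero_mulVec]
      exact hk (Pi.single i 1)
  rwa [Nat.card_fun, Nat.card_eq_fintype_card (α := ι)] at hker

variable [DecidableEq κ]

lemma card_mul_mul_eq_zero_le [Finite R] (M : Matrix ι ι R) (A : Matrix κ κ R) :
    Nat.card {w : Matrix ι κ R // M * w * A = 0} ≤
      Nat.card {v // (A.det • M) *ᵥ v = 0} ^ Fintype.card κ := by
  have hdet {w : Matrix ι κ R} (hw : M * w * A = 0) : (A.det • M) * w = 0 := by
    simpa [Matrix.mul_assoc, Matrix.mul_adjugate] using congrArg (· * A.adjugate) hw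
  let col (w : {w : Matrix ι κ R // M * w * A = 0}) (s : κ) : {v // (A.det • M) *ᵥ v = 0} :=
    ⟨w.1.col s, funext fun i => congrFun₂ (hdet w.2) i s⟩
  rw [← Nat.card_eq_fintype_card (α := κ), ← Nat.card_fun]
  refine Nat.card_le_card_of_injective col fun w w' h => ?_
  ext i s
  exact congrFun (congrArg Subtype.val (congrFun h s)) i

variable [DecidableEq ι]

/-- The complete exponential sum of the quadratic form `z ↦ tr (T z A zᵀ)` on `ι × κ` matrices over
a finite ring, with respect to the additive character `ψ`. -/
def matrixGaussSum [Fintype R] (ψ : AddChar R ℂ) (T : Matrix ι ι R) (A : Matrix κ κ R) : ℂ :=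
  ∑ z : Matrix ι κ R, ψ (T * (z * A * zᵀ)).trace

variable [Fintype R] {ψ : AddChar R ℂ} {T : Matrix ι ι R} {A : Matrix κ κ R}

lemma norm_matrixGaussSum_sq_le (hψ : ψ.IsPrimitive) (hA : A.IsSymm) :
    ‖matrixGaussSum ψ T A‖ ^ 2 ≤
      (Nat.card (Matrix ι κ R) : ℝ) * Nat.card {w : Matrix ι κ R // (T + Tᵀ) * w * A = 0} := by
  let β (w : Matrix ι κ R) : Matrix ι κ R →+ R :=
    AddMonoidHom.mk' (fun z => ((T + Tᵀ) * w * A * zᵀ).trace) fun x y => by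
      simp [Matrix.mul_add]
  have hβ {w : Matrix ι κ R} (hw : ψ.compAddMonoidHom (β w) = 0) : (T + Tᵀ) * w * A = 0 :=
    eq_zero_of_forall_addChar_trace_mul_eq_one hψ fun z => by
      simpa [β] using DFunLike.congr_fun hw zᵀ
  have hradical : Nat.card {w // ψ.compAddMonoidHom (β w) = 0} ≤
      Nat.card {w : Matrix ι κ R // (T + Tᵀ) * w * A = 0} :=
    Nat.card_mono (Set.toFinite _) fun _ => hβ
  calc ‖matrixGaussSum ψ T A‖ ^ 2
      ≤ Nat.card (Matrix ι κ R) * Nat.card {w // ψ.compAddMonoidHom (β w) = 0} :=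
        norm_sum_sq_le_card_mul_card_addChar_eq_zero (fun _ => ψ.norm_apply _) fun w z => by
          simp only [trace_mul_add_mul_mul_transpose_add T hA, AddChar.map_add_eq_mul]
          rfl
    _ ≤ _ := by gcongr

lemma norm_matrixGaussSum_sq_mul_pow_le (hψ : ψ.IsPrimitive) (hA : A.IsSymm) {c D : ℕ}
    (hD : D ≠ 0) (h : ∀ k : ℕ, k • A.det • (T + Tᵀ) = 0 → c ∣ k * D) :
    ‖matrixGaussSum ψ T A‖ ^ 2 * (c : ℝ) ^ Fintype.card κ ≤
      (D : ℝ) ^ Fintype.card κ * (Nat.card R : ℝ) ^ (2 * (Fintype.card ι * Fintype.card κ)) := by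
  set N := Nat.card {v // (A.det • (T + Tᵀ)) *ᵥ v = 0}
  have hcard : Nat.card (Matrix ι κ R) = Nat.card R ^ (Fintype.card ι * Fintype.card κ) := by
    change Nat.card (ι → κ → R) = _
    simp [← pow_mul, mul_comm]
  have hradical : (Nat.card {w : Matrix ι κ R // (T + Tᵀ) * w * A = 0} : ℝ) ≤
      (N : ℝ) ^ Fintype.card κ :=
    mod_cast card_mul_mul_eq_zero_le (T + Tᵀ) A
  have hker : (N : ℝ) * c ≤ D * (Nat.card R : ℝ) ^ Fintype.card ι :=
    mod_cast card_mulVec_eq_zero_mul_le _ hD h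
  calc ‖matrixGaussSum ψ T A‖ ^ 2 * (c : ℝ) ^ Fintype.card κ
      ≤ Nat.card (Matrix ι κ R) * (N : ℝ) ^ Fintype.card κ * (c : ℝ) ^ Fintype.card κ := by
        grw [norm_matrixGaussSum_sq_le hψ hA, hradical]
    _ = (Nat.card R : ℝ) ^ (Fintype.card ι * Fintype.card κ) *
          ((N : ℝ) * c) ^ Fintype.card κ := by
        rw [hcard]
        push_cast
        ring
    _ ≤ (Nat.card R : ℝ) ^ (Fintype.card ι * Fintype.card κ) *
          (D * (Nat.card R : ℝ) ^ Fintype.card ι) ^ Fintype.card κ := by gcongr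
    _ = _ := by ring

end MatrixGaussSum

lemma dvd_mul_gcd_of_forall_dvd_mul {ι : Type*} {s : Finset ι} {a : ι → ℤ} {q x : ℤ}
    (h : ∀ p ∈ s, q ∣ x * a p) : q ∣ x * Int.gcd q (s.gcd a) := by
  have hgcd : q ∣ x * s.gcd a := by
    have hdvd := Finset.dvd_gcd h
    rw [Finset.gcd_mul_left] at hdvd
    exact hdvd.trans (mul_dvd_mul_right (normalize_associated x).dvd _)
  have hcoe_gcd := Int.dvd_coe_gcd (dvd_mul_left q x) hgcd
  rw [Int.gcd_mul_left, Nat.cast_mul, Int.natCast_natAbs] at hcoe_gcd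
  exact hcoe_gcd.trans (mul_dvd_mul_right ((abs_dvd _ _).2 dvd_rfl) _)

section UpperMatrix

variable {m : ℕ}

/-- The upper triangular matrix with entries `a`; it turns the sum `∑ a_{ij} X_{ij}` over `i ≤ j`
into the trace `tr (aᵀ X)`. -/
def upperMatrix {R : Type*} [Zero R] (a : Idx m → R) : Matrix (Fin m) (Fin m) R :=
  Matrix.of fun i j => if h : i ≤ j then a ⟨(i, j), h⟩ else 0

lemma trace_transpose_upperMatrix_mul {R : Type*} [NonUnitalNonAssocSemiring R] (a : Idx m → R)
    (X : Matrix (Fin m) (Fin m) R) :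
    ((upperMatrix a)ᵀ * X).trace = ∑ p : Idx m, a p * X p.1.1 p.1.2 := by
  have hentry (p : Idx m) : a p = upperMatrix a p.1.1 p.1.2 := by
    simp [upperMatrix, p.2]
  simp_rw [hentry]
  rw [← Finset.sum_subtype {p : Fin m × Fin m | p.1 ≤ p.2} (by simp)
    fun p => upperMatrix a p.1 p.2 * X p.1 p.2, Finset.sum_filter_of_ne]
  · simp only [Fintype.sum_prod_type_right, Matrix.trace, Matrix.diag_apply, Matrix.mul_apply,
      Matrix.transpose_apply]
  · intro p _ hp
    by_contra hlt
    exact hp (by simp [upperMatrix, hlt])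

lemma mul_two_mul_eq_zero_of_smul_upperMatrix_add_transpose_eq_zero {R : Type*} [CommRing R]
    {a : Idx m → R} {r : R} (h : r • (upperMatrix a + (upperMatrix a)ᵀ) = 0) (p : Idx m) :
    r * 2 * a p = 0 := by
  obtain ⟨⟨i, j⟩, hij : i ≤ j⟩ := p
  have hentry := congrFun₂ h i j
  rcases hij.eq_or_lt with rfl | hlt
  · have hdiag : r * (a ⟨(i, i), le_rfl⟩ + a ⟨(i, i), le_rfl⟩) = 0 := by
      simpa [upperMatrix] using hentry
    linear_combination hdiag
  · have hoff : r * a ⟨(i, j), hij⟩ = 0 := by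
      simpa [upperMatrix, hij, hlt.not_ge] using hentry
    linear_combination 2 * hoff

lemma dvd_of_smul_upperMatrix_add_transpose_eq_zero {q : ℕ} {a : Idx m → ℤ} {d : ℤ} {k : ℕ}
    (h : k • (d : ZMod q) • (upperMatrix (fun p => (a p : ZMod q)) +
      (upperMatrix fun p => (a p : ZMod q))ᵀ) = 0) :
    q ∣ k * ((2 * d).natAbs * Int.gcd q (Finset.univ.gcd a)) := by
  have hentry (p : Idx m) : (q : ℤ) ∣ k * (2 * d) * a p := by
    rw [← smul_assoc, nsmul_eq_mul] at h
    rw [← ZMod.intCast_zmod_eq_zero_iff_dvd]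
    push_cast
    linear_combination mul_two_mul_eq_zero_of_smul_upperMatrix_add_transpose_eq_zero h p
  have hdvd := dvd_mul_gcd_of_forall_dvd_mul (s := Finset.univ) fun p _ => hentry p
  simpa [Int.natAbs_mul, mul_assoc] using Int.natAbs_dvd_natAbs.2 hdvd

end UpperMatrix

lemma sum_Icc_map_intCast_eq_sum_matrix {ι κ M : Type*} [Fintype ι] [Fintype κ] [DecidableEq ι]
    [DecidableEq κ] [AddCommMonoid M] (q : ℕ) [NeZero q] (F : Matrix ι κ (ZMod q) → M) :
    ∑ z ∈ (Finset.Icc (fun _ _ => 0) (fun _ _ => (q : ℤ) - 1) : Finset (ι → κ → ℤ)),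
      F ((Matrix.of z).map (↑)) = ∑ z, F z := by
  refine Finset.sum_nbij' (fun z => (Matrix.of z).map (↑)) (fun z i s => ((z i s).val : ℤ))
    (fun _ _ => Finset.mem_univ _) (fun z _ => ?_) (fun z hz => ?_) (fun z _ => ?_)
    (fun _ _ => rfl)
  · rw [Finset.mem_Icc]
    exact ⟨fun i s => by positivity, fun i s => by have := (z i s).val_lt; lia⟩
  · rw [Finset.mem_Icc] at hz
    ext i s
    have hlt : z i s < q := Int.lt_of_le_sub_one (hz.2 i s)
    exact (ZMod.val_intCast _).trans (Int.emod_eq_of_lt (hz.1 i s) hlt)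
  · ext i s
    simp

section CompleteSum

variable {m n : ℕ} (q : ℕ) [NeZero q]

lemma eR_intCast_div (k : ℤ) : eR (k / q) = ZMod.stdAddChar (k : ZMod q) := by
  rw [ZMod.stdAddChar_coe, eR]
  congr 1
  push_cast
  ring

lemma intCast_quadZ {R : Type*} [CommRing R] (A : Matrix (Fin n) (Fin n) ℤ)
    (z : Fin m → Fin n → ℤ) (i j : Fin m) :
    (quadZ A z i j : R) =
      ((Matrix.of z).map ((↑) : ℤ → R) * A.map ((↑) : ℤ → R) *
        ((Matrix.of z).map ((↑) : ℤ → R))ᵀ) i j := by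
  simp only [quadZ, Matrix.mul_apply, Matrix.transpose_apply, Matrix.of_apply, Matrix.map_apply,
    Finset.sum_mul]
  rw [Finset.sum_comm]
  push_cast
  rfl

lemma Saq_eq_addChar_mul_matrixGaussSum (A : Matrix (Fin n) (Fin n) ℤ) (a b : Idx m → ℤ) :
    Saq A q a b = ZMod.stdAddChar ((-∑ p, a p * b p : ℤ) : ZMod q) *
      matrixGaussSum ZMod.stdAddChar (upperMatrix fun p => (a p : ZMod q))ᵀ
        (A.map ((↑) : ℤ → ZMod q)) := by
  rw [Saq, matrixGaussSum, ← sum_Icc_map_intCast_eq_sum_matrix, Finset.mul_sum]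
  refine Finset.sum_congr rfl fun z _ => ?_
  have hphase : (∑ p : Idx m, (a p : ℝ) * ((quadZ A z p.1.1 p.1.2 - b p : ℤ) : ℝ)) =
      ((-∑ p, a p * b p + ∑ p : Idx m, a p * quadZ A z p.1.1 p.1.2 : ℤ) : ℝ) := by
    push_cast
    simp only [mul_sub, Finset.sum_sub_distrib]
    ring
  rw [hphase, Int.cast_natCast, eR_intCast_div, Int.cast_add, AddChar.map_add_eq_mul,
    trace_transpose_upperMatrix_mul]
  push_cast
  simp_rw [intCast_quadZ]

lemma norm_Saq_sq_mul_pow_le {A : Matrix (Fin n) (Fin n) ℤ} (hA : A.IsSymm) (hdet : A.det ≠ 0)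
    (a b : Idx m → ℤ) :
    ‖Saq A q a b‖ ^ 2 * (q : ℝ) ^ n ≤
      (|2 * A.det| * Int.gcd q (Finset.univ.gcd a)) ^ n * (q : ℝ) ^ (2 * (m * n)) := by
  have hD : (2 * A.det).natAbs * Int.gcd q (Finset.univ.gcd a) ≠ 0 := by
    simp [hdet, NeZero.ne q]
  have hbound := norm_matrixGaussSum_sq_mul_pow_le (c := q)
    (T := (upperMatrix fun p => (a p : ZMod q))ᵀ) (ZMod.isPrimitive_stdAddChar q)
    (hA.map ((↑) : ℤ → ZMod q)) hD fun k hk =>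
      dvd_of_smul_upperMatrix_add_transpose_eq_zero (d := A.det) <| by
        rwa [← Int.cast_det, Matrix.transpose_transpose, add_comm] at hk
  rw [Saq_eq_addChar_mul_matrixGaussSum, norm_mul, AddChar.norm_apply, one_mul]
  simpa [Nat.cast_natAbs] using hbound

end CompleteSum

lemma le_rpow_mul_rpow_of_sq_mul_pow_le {x D q : ℝ} (hD : 0 ≤ D) (hq : 0 < q) {n k : ℕ}
    (h : x ^ 2 * q ^ n ≤ D ^ n * q ^ (2 * k)) :
    x ≤ D ^ ((n : ℝ) / 2) * q ^ ((k : ℝ) - n / 2) := by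
  refine le_of_sq_le_sq (le_of_mul_le_mul_right (h.trans_eq ?_) (pow_pos hq n)) (by positivity)
  have hDpow : (D ^ ((n : ℝ) / 2)) ^ 2 = D ^ n := by
    rw [← Real.rpow_mul_natCast hD, Nat.cast_ofNat, div_mul_cancel₀ _ two_ne_zero,
      Real.rpow_natCast]
  have hqpow : (q ^ ((k : ℝ) - n / 2)) ^ 2 * q ^ n = q ^ (2 * k) := by
    rw [← Real.rpow_mul_natCast hq.le, ← Real.rpow_natCast q n, ← Real.rpow_add hq,
      ← Real.rpow_natCast]
    congr 1
    push_cast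
    ring
  rw [mul_pow, mul_assoc, hDpow, hqpow]

lemma rpow_sub_half_le_rpow_sub_div_add {q r s ε m : ℝ} (hq : 1 ≤ q) (hs : 0 ≤ s)
    (hm : 1 ≤ m) (hε : 0 ≤ ε) :
    q ^ (r - s / 2) ≤ q ^ (r - s / (2 * (m * (m + 1) / 2)) + ε) := by
  have hdiv : s / (2 * (m * (m + 1) / 2)) ≤ s / 2 := by
    gcongr
    nlinarith
  gcongr
  linarith

lemma det_ne_zero_of_posDef_map_intCast {ι : Type*} [Fintype ι] [DecidableEq ι]
    {A : Matrix ι ι ℤ} (hA : (A.map ((↑) : ℤ → ℝ)).PosDef) : A.det ≠ 0 := by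
  have hpos : (0 : ℝ) < A.det := by
    rw [Int.cast_det]
    exact hA.det_pos
  exact_mod_cast hpos.ne'

theorem stmt10_general {m n : ℕ} {A : Matrix (Fin n) (Fin n) ℤ} (hA : A.IsSymm)
    (hdet : A.det ≠ 0) {q : ℤ} (hq : 1 ≤ q) (a b : Idx m → ℤ) :
    ‖Saq A q a b‖ ≤ (|2 * A.det| * Int.gcd q (Finset.univ.gcd a) : ℝ) ^ ((n : ℝ) / 2) *
      (q : ℝ) ^ ((m : ℝ) * n - n / 2) := by
  lift q to ℕ using by lia
  have : NeZero q := ⟨by lia⟩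
  have hbound := norm_Saq_sq_mul_pow_le q hA hdet a b
  have hq_pos : (0 : ℝ) < q := mod_cast hq
  simpa using le_rpow_mul_rpow_of_sq_mul_pow_le (by positivity) hq_pos hbound

/-- bound \eqref{Saqbound} for complete exponential sums. -/
theorem stmt10 (m n : ℕ) [NeZero m] [NeZero n]
    (A : Matrix (Fin n) (Fin n) ℤ) (hAs : A.IsSymm)
    (hApd : (A.map ((↑) : ℤ → ℝ)).PosDef)
    (ε : ℝ) (hε : 0 < ε) :
    ∃ K : ℝ, 0 < K ∧
      ∀ q : ℤ, 1 ≤ q → ∀ a : Idx m → ℤ, Int.gcd q (Finset.univ.gcd a) = 1 →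
        ∀ b : Idx m → ℤ,
          ‖Saq A q a b‖ ≤
            K * (q : ℝ) ^ ((m : ℝ) * (n : ℝ) -
              (n : ℝ) / (2 * ((m : ℝ) * ((m : ℝ) + 1) / 2)) + ε) := by
  have hdet := det_ne_zero_of_posDef_map_intCast hApd
  refine ⟨|2 * A.det| ^ ((n : ℝ) / 2), by positivity, fun q hq a ha b => ?_⟩
  grw [← rpow_sub_half_le_rpow_sub_div_add (mod_cast hq) n.cast_nonneg
    (mod_cast NeZero.one_le) hε.le]
  simpa [ha] using stmt10_general hAs hdet hq a b
end
end

section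
/- Assume n > (2γ + m(m−1))(R+1). Then the singular integral 𝔍(c) = ∫_{ℝ^R} I(η)·e(−Σ_{1≤i≤j≤m} η_{ij}c_{ij}) dη converges absolutely, and for any ε > 0 there is a constant K (depending only on A, m, n, ε) such that for every Q ≥ 1, |𝔍(c) − 𝔍(Q; c)| ≤ K·Q^{−1+ε}, uniformly in c ∈ ℝ^R. -/
open scoped BigOperators
open MeasureTheory Matrix Filter

noncomputable section

/-
Weyl differencing bounds `|I(η)|²` by `∫ ∏ min(2, |gᵢ|⁻¹)`, where `g` is the gradient of the phase,
a linear map with matrix `(U + Uᵀ) ⊗ A` for `U` the upper triangular matrix of `η`. Pick the entry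
`(i, j)` at which `|η|` is largest, keep only the `n` factors of the block row `i`, and replace
`min(2, |g|⁻¹)` by `2|g|^(-θ)` with `θ < 1`, which is locally integrable. Integrating over the
`j`-th block of variables, on which the block row acts by a multiple of the invertible matrix `A`,
gives `|I(η)|² ≪ ‖η‖^(-θn)`. Since `m(m+1) + 2σ < n`, for `θ` close to `1` this makes `I(η)` decay
faster than `‖η‖^(-(R+σ))`, so the integral converges and its tail over `‖η‖ > Q` is `≪ Q^(-σ)`.
Every `1/γᵢ` is at least `1`, so `σ = 1` is admissible in the theorem.
-/

section SingularIntegral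

open Metric
open scoped NNReal ENNReal Kronecker

variable {ι κ μ : Type*} [Fintype ι] [Fintype κ] [Fintype μ]

lemma eR_eq_fourierChar (z : ℝ) : eR z = Real.fourierChar z := by
  rw [eR, Real.fourierChar_apply]
  push_cast
  ring_nf

lemma continuous_eR : Continuous eR := by
  simp only [funext eR_eq_fourierChar]
  fun_prop

lemma norm_eR (z : ℝ) : ‖eR z‖ = 1 := by
  rw [eR_eq_fourierChar, Circle.norm_coe]

lemma enorm_eR (z : ℝ) : ‖eR z‖ₑ = 1 := by
  rw [← ofReal_norm, norm_eR, ENNReal.ofReal_one]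

lemma eR_add (x y : ℝ) : eR (x + y) = eR x * eR y := by
  simp only [eR_eq_fourierChar, AddChar.map_add_eq_mul, Circle.coe_mul]

lemma eR_sum {α : Type*} (s : Finset α) (f : α → ℝ) : eR (∑ i ∈ s, f i) = ∏ i ∈ s, eR (f i) := by
  simp only [eR, ← Complex.exp_sum, Complex.ofReal_sum, Finset.mul_sum]

lemma conj_eR (x : ℝ) : starRingEnd ℂ (eR x) = eR (-x) := by
  rw [eR_eq_fourierChar, eR_eq_fourierChar, AddChar.map_neg_eq_inv, Circle.coe_inv_eq_conj]

lemma enorm_setIntegral_eR_le {E : Type*} [MeasurableSpace E] (ν : Measure E) (s : Set E)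
    (f : E → ℝ) : ‖∫ x in s, eR (f x) ∂ν‖ₑ ≤ ν s :=
  calc ‖∫ x in s, eR (f x) ∂ν‖ₑ ≤ ∫⁻ _ in s, 1 ∂ν :=
        (enorm_integral_le_lintegral_enorm _).trans_eq (by simp only [enorm_eR])
    _ = ν s := setLIntegral_one s

lemma enorm_setIntegral_Icc_eR_le_inv (a b g : ℝ) :
    ‖∫ x in Set.Icc a b, eR (x * g)‖ₑ ≤ ‖g‖ₑ⁻¹ := by
  rcases eq_or_ne g 0 with rfl | hg
  · simp only [enorm_zero, ENNReal.inv_zero, le_top]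
  rcases lt_or_ge b a with hab | hab
  · simp only [Set.Icc_eq_empty_of_lt hab, setIntegral_empty, enorm_zero, zero_le]
  have hc : (2 * Real.pi * Complex.I * g : ℂ) ≠ 0 := by simp [hg, Real.pi_ne_zero]
  have hexp (x : ℝ) : eR (x * g) = Complex.exp (2 * Real.pi * Complex.I * g * x) := by
    rw [eR]
    push_cast
    ring_nf
  have hint : ∫ x in Set.Icc a b, eR (x * g) =
      (eR (b * g) - eR (a * g)) / (2 * Real.pi * Complex.I * g) := by
    rw [integral_Icc_eq_integral_Ioc, ← intervalIntegral.integral_of_le hab]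
    simp_rw [hexp]
    exact integral_exp_mul_complex hc
  have hnum : ‖eR (b * g) - eR (a * g)‖ ≤ 2 :=
    (norm_sub_le _ _).trans_eq (by rw [norm_eR, norm_eR]; norm_num)
  have hden : ‖(2 * Real.pi * Complex.I * g : ℂ)‖ = 2 * Real.pi * |g| := by
    simp [abs_of_pos Real.pi_pos]
  have hg' : 0 < |g| := abs_pos.2 hg
  rw [← enorm_inv hg, enorm_le_iff_norm_le, hint, norm_div, hden, norm_inv, Real.norm_eq_abs]
  calc ‖eR (b * g) - eR (a * g)‖ / (2 * Real.pi * |g|)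
      ≤ 2 / (2 * |g|) := by
        gcongr
        nlinarith [Real.pi_gt_three, hg']
    _ = |g|⁻¹ := by field_simp

lemma enorm_setIntegral_Icc_eR_le_min {a b : ℝ} (hab : b - a ≤ 2) (g : ℝ) :
    ‖∫ x in Set.Icc a b, eR (x * g)‖ₑ ≤ min 2 ‖g‖ₑ⁻¹ := by
  refine le_min ((enorm_setIntegral_eR_le _ _ _).trans ?_) (enorm_setIntegral_Icc_eR_le_inv a b g)
  rw [Real.volume_Icc]
  exact ENNReal.ofReal_le_of_le_toReal hab

lemma enorm_setIntegral_Icc_eR_dotProduct_le {a b : ι → ℝ} (hab : ∀ i, b i - a i ≤ 2)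
    (g : ι → ℝ) :
    ‖∫ t in Set.Icc a b, eR (t ⬝ᵥ g)‖ₑ ≤ ∏ i, min 2 ‖g i‖ₑ⁻¹ := by
  have hprod : ∫ t in Set.Icc a b, eR (t ⬝ᵥ g) =
      ∏ i, ∫ u in Set.Icc (a i) (b i), eR (u * g i) := by
    rw [← Set.pi_univ_Icc, volume_pi, Measure.restrict_pi_pi]
    simp_rw [dotProduct, eR_sum]
    exact integral_fintype_prod_eq_prod (𝕜 := ℂ) fun i u => eR (u * g i)
  have henorm (z : ι → ℂ) : ‖∏ i, z i‖ₑ = ∏ i, ‖z i‖ₑ := by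
    simp only [enorm_eq_nnnorm, nnnorm_prod, ENNReal.ofNNReal_finsetProd]
  rw [hprod, henorm]
  exact Finset.prod_le_prod' fun i _ => enorm_setIntegral_Icc_eR_le_min (hab i) (g i)

/-- Weyl differencing: the autocorrelation of a quadratic phase is a linear phase. -/
lemma enorm_integral_sq_le_lintegral_autocorrelation {E 𝕜 : Type*} [RCLike 𝕜] [AddCommGroup E]
    [MeasurableSpace E] [MeasurableAdd₂ E] [MeasurableNeg E] (ν : Measure E) [SFinite ν]
    [ν.IsAddRightInvariant] [ν.IsNegInvariant] {F : E → 𝕜} (hF : Integrable F ν) :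
    ‖∫ t, F t ∂ν‖ₑ ^ 2 ≤ ∫⁻ x, ‖∫ t, F t * starRingEnd 𝕜 (F (t - x)) ∂ν‖ₑ ∂ν := by
  have hG : Integrable (fun x => starRingEnd 𝕜 (F (-x))) ν := by
    simpa only [Function.comp_def, RCLike.conjLIE_apply] using
      RCLike.conjLIE.integrable_comp_iff.2 hF.comp_neg
  have hconj : ∫ x, starRingEnd 𝕜 (F (-x)) ∂ν = starRingEnd 𝕜 (∫ x, F x ∂ν) := by
    rw [integral_neg_eq_self (fun x => starRingEnd 𝕜 (F x)) ν, integral_conj]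
  calc ‖∫ t, F t ∂ν‖ₑ ^ 2
      = ‖(∫ t, F t ∂ν) * ∫ x, starRingEnd 𝕜 (F (-x)) ∂ν‖ₑ := by
        rw [hconj, enorm_mul, sq, ← ofReal_norm (starRingEnd 𝕜 _), RCLike.norm_conj, ofReal_norm]
    _ = ‖∫ x, ∫ t, F t * starRingEnd 𝕜 (F (t - x)) ∂ν ∂ν‖ₑ := by
        rw [← ContinuousLinearMap.mul_apply' 𝕜 𝕜, ← integral_convolution _ hF hG]
        simp only [convolution_def, ContinuousLinearMap.mul_apply', neg_sub]
    _ ≤ ∫⁻ x, ‖∫ t, F t * starRingEnd 𝕜 (F (t - x)) ∂ν‖ₑ ∂ν :=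
        enorm_integral_le_lintegral_enorm _

lemma closedBall_inter_closedBall_pi (x y : ι → ℝ) {r : ℝ} (hr : 0 ≤ r) :
    closedBall x r ∩ closedBall y r =
      Set.Icc (fun i => max (x i - r) (y i - r)) fun i => min (x i + r) (y i + r) := by
  simp only [closedBall_pi _ hr, ← Set.pi_inter_distrib, ← Set.pi_univ_Icc,
    Real.closedBall_eq_Icc, Set.Icc_inter_Icc]

lemma dotProduct_mulVec_sub_dotProduct_mulVec_sub (S : Matrix ι ι ℝ) (t x : ι → ℝ) :
    t ⬝ᵥ S *ᵥ t - (t - x) ⬝ᵥ S *ᵥ (t - x) = -(x ⬝ᵥ S *ᵥ x) + t ⬝ᵥ (S + Sᵀ) *ᵥ x := by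
  have htranspose : t ⬝ᵥ Sᵀ *ᵥ x = x ⬝ᵥ S *ᵥ t := by
    rw [dotProduct_mulVec, vecMul_transpose, dotProduct_comm]
  rw [add_mulVec, dotProduct_add, htranspose, mulVec_sub, sub_dotProduct, dotProduct_sub,
    dotProduct_sub]
  ring

lemma enorm_autocorrelation_eR_dotProduct_mulVec_le (S : Matrix ι ι ℝ) (x : ι → ℝ)
    {F : (ι → ℝ) → ℂ} (hF : F = (closedBall 0 1).indicator fun t => eR (t ⬝ᵥ S *ᵥ t)) :
    ‖∫ t, F t * starRingEnd ℂ (F (t - x))‖ₑ ≤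
      (closedBall 0 2).indicator (fun x => ∏ i, min 2 ‖((S + Sᵀ) *ᵥ x) i‖ₑ⁻¹) x := by
  have hmem (t : ι → ℝ) : t - x ∈ closedBall 0 1 ↔ t ∈ closedBall x 1 := by
    rw [mem_closedBall_zero_iff, mem_closedBall_iff_norm]
  have hprod : (fun t => F t * starRingEnd ℂ (F (t - x))) =
      (closedBall 0 1 ∩ closedBall x 1).indicator fun t =>
        eR (-(x ⬝ᵥ S *ᵥ x)) * eR (t ⬝ᵥ (S + Sᵀ) *ᵥ x) := by
    funext t
    by_cases ht : t ∈ closedBall 0 1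
    · by_cases htx : t ∈ closedBall x 1
      · rw [hF, Set.indicator_of_mem ht, Set.indicator_of_mem ((hmem t).2 htx),
          Set.indicator_of_mem (Set.mem_inter ht htx), conj_eR, ← eR_add, ← eR_add,
          ← sub_eq_add_neg, dotProduct_mulVec_sub_dotProduct_mulVec_sub]
      · rw [hF, Set.indicator_of_notMem (mt (hmem t).1 htx), map_zero, mul_zero,
          Set.indicator_of_notMem fun h => htx h.2]
    · rw [hF, Set.indicator_of_notMem ht, zero_mul,
        Set.indicator_of_notMem fun h => ht h.1]
  rw [hprod, integral_indicator (measurableSet_closedBall.inter measurableSet_closedBall)]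
  by_cases hx : x ∈ closedBall 0 2
  · rw [Set.indicator_of_mem hx, integral_const_mul, enorm_mul, enorm_eR, one_mul,
      closedBall_inter_closedBall_pi _ _ zero_le_one]
    refine enorm_setIntegral_Icc_eR_dotProduct_le (fun i => ?_) _
    linarith [min_le_left ((0 : ι → ℝ) i + 1) (x i + 1),
      le_max_left ((0 : ι → ℝ) i - 1) (x i - 1)]
  · have hdisj : Disjoint (closedBall (0 : ι → ℝ) 1) (closedBall x 1) := by
      refine closedBall_disjoint_closedBall ?_
      rw [mem_closedBall, not_le, dist_comm] at hx
      linarith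
    simp [hdisj.inter_eq]

lemma enorm_setIntegral_eR_dotProduct_mulVec_sq_le (S : Matrix ι ι ℝ) :
    ‖∫ t in closedBall 0 1, eR (t ⬝ᵥ S *ᵥ t)‖ₑ ^ 2 ≤
      ∫⁻ x in closedBall 0 2, ∏ i, min 2 ‖((S + Sᵀ) *ᵥ x) i‖ₑ⁻¹ := by
  set F : (ι → ℝ) → ℂ := (closedBall 0 1).indicator fun t => eR (t ⬝ᵥ S *ᵥ t) with hF
  have hphase : Continuous fun t : ι → ℝ => eR (t ⬝ᵥ S *ᵥ t) :=
    continuous_eR.comp (by fun_prop)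
  have hint : Integrable F :=
    (hphase.continuousOn.integrableOn_compact (isCompact_closedBall 0 1)).integrable_indicator
      measurableSet_closedBall
  rw [← integral_indicator measurableSet_closedBall, ← hF,
    ← lintegral_indicator measurableSet_closedBall]
  exact (enorm_integral_sq_le_lintegral_autocorrelation volume hint).trans
    (lintegral_mono fun x => enorm_autocorrelation_eR_dotProduct_mulVec_le S x hF)

lemma min_two_inv_le_two_mul_rpow_neg {θ : ℝ} (hθ0 : 0 ≤ θ) (hθ1 : θ ≤ 1) (y : ℝ≥0∞) :
    min 2 y⁻¹ ≤ 2 * y ^ (-θ) := by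
  rw [ENNReal.rpow_neg, ← ENNReal.inv_rpow]
  rcases le_total 1 y⁻¹ with hy | hy
  · refine (min_le_left _ _).trans ?_
    have hpow : 1 ≤ y⁻¹ ^ θ := by
      simpa only [ENNReal.rpow_zero] using ENNReal.rpow_le_rpow_of_exponent_le hy hθ0
    exact le_mul_of_one_le_right' hpow
  · calc min 2 y⁻¹ ≤ y⁻¹ := min_le_right _ _
      _ ≤ y⁻¹ ^ θ := by
        simpa only [ENNReal.rpow_one] using ENNReal.rpow_le_rpow_of_exponent_ge hy hθ1
      _ ≤ 2 * y⁻¹ ^ θ := le_mul_of_one_le_left' one_le_two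

lemma lintegral_pi_prod_eq_prod {α : ι → Type*} [∀ i, MeasurableSpace (α i)]
    (ν : ∀ i, Measure (α i)) [∀ i, SigmaFinite (ν i)] {f : ∀ i, α i → ℝ≥0∞}
    (hf : ∀ i, Measurable (f i)) :
    ∫⁻ x, ∏ i, f i (x i) ∂Measure.pi ν = ∏ i, ∫⁻ u, f i u ∂ν i := by
  classical
  have hmarginal (s : Finset ι) (x : ∀ i, α i) :
      (∫⋯∫⁻_s, (fun x => ∏ i ∈ s, f i (x i)) ∂ν) x = ∏ i ∈ s, ∫⁻ u, f i u ∂ν i := by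
    induction s using Finset.induction_on generalizing x with
    | empty => simp only [lmarginal_empty, Finset.prod_empty]
    | insert j s hj ih =>
      have hmeas : Measurable fun x : ∀ i, α i => ∏ i ∈ insert j s, f i (x i) := by fun_prop
      have hconst (x : ∀ i, α i) :
          ∫⁻ u, ∏ i ∈ insert j s, f i (Function.update x j u i) ∂ν j =
            (∫⁻ u, f j u ∂ν j) * ∏ i ∈ s, f i (x i) := by
        rw [← lintegral_mul_const _ (hf j)]
        refine lintegral_congr fun u => ?_
        rw [Finset.prod_insert hj, Function.update_self]
        congr 1
        refine Finset.prod_congr rfl fun i hi => ?_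
        rw [Function.update_of_ne (ne_of_mem_of_not_mem hi hj)]
      rw [lmarginal_insert' _ hmeas hj, Finset.prod_insert hj, ← ih x]
      simp only [hconst, lmarginal]
      exact lintegral_const_mul _ (by fun_prop)
  rcases isEmpty_or_nonempty (∀ i, α i) with hα | ⟨⟨x⟩⟩
  · obtain ⟨i, hi⟩ := isEmpty_pi.1 hα
    rw [lintegral_of_isEmpty, Finset.prod_eq_zero (Finset.mem_univ i) (lintegral_of_isEmpty _ _)]
  · rw [lintegral_eq_lmarginal_univ x, hmarginal]

lemma setLIntegral_closedBall_enorm_rpow_neg_lt_top {E : Type*} [NormedAddCommGroup E]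
    [NormedSpace ℝ E] [FiniteDimensional ℝ E] [Nontrivial E] [MeasurableSpace E] [BorelSpace E]
    (ν : Measure E) [ν.IsAddHaarMeasure] {θ : ℝ} (hθ : θ < Module.finrank ℝ E) (x : E) (r : ℝ) :
    ∫⁻ y in closedBall x r, ‖y‖ₑ ^ (-θ) ∂ν < ⊤ := by
  have hloc : LocallyIntegrable (fun y : E => ‖y‖ ^ (-θ)) ν := by
    refine locallyIntegrable_of_norm_le_rpow (C := 1) Module.finrank_pos hθ
      (Eventually.of_forall fun y => ?_)
      (measurable_norm.pow_const (-θ)).aestronglyMeasurable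
    rw [one_mul, Real.norm_of_nonneg (by positivity)]
  have hne : ∀ᵐ y ∂ν.restrict (closedBall x r), y ≠ 0 :=
    ae_restrict_of_ae (compl_mem_ae_iff.2 (measure_singleton 0))
  refine lt_of_eq_of_lt (lintegral_congr_ae ?_)
    (hloc.integrableOn_isCompact (isCompact_closedBall x r)).hasFiniteIntegral
  filter_upwards [hne] with y hy
  rw [← ofReal_norm, ENNReal.ofReal_rpow_of_pos (norm_pos_iff.2 hy),
    Real.enorm_of_nonneg (by positivity)]

lemma exists_setLIntegral_enorm_add_rpow_neg_le {θ : ℝ} (hθ0 : 0 ≤ θ) (hθ1 : θ < 1) (r : ℝ) :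
    ∃ C : ℝ≥0, ∀ c : ℝ, ∫⁻ u in closedBall 0 r, ‖u + c‖ₑ ^ (-θ) ≤ C := by
  set g : ℝ → ℝ≥0∞ := (closedBall 0 1).indicator fun y => ‖y‖ₑ ^ (-θ)
  have hpointwise (y : ℝ) : ‖y‖ₑ ^ (-θ) ≤ 1 + g y := by
    by_cases hy : y ∈ closedBall 0 1
    · exact (Set.indicator_of_mem hy fun y : ℝ => ‖y‖ₑ ^ (-θ)).ge.trans le_add_self
    · have hy1 : 1 ≤ ‖y‖ₑ := by
        rw [mem_closedBall_zero_iff, not_le] at hy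
        simpa only [ofReal_norm] using ENNReal.one_le_ofReal.2 hy.le
      calc ‖y‖ₑ ^ (-θ) ≤ ‖y‖ₑ ^ (0 : ℝ) :=
            ENNReal.rpow_le_rpow_of_exponent_le hy1 (neg_nonpos.2 hθ0)
        _ ≤ 1 + g y := by rw [ENNReal.rpow_zero]; exact le_self_add
  have hfinite : volume (closedBall (0 : ℝ) r) + ∫⁻ y, g y < ⊤ := by
    rw [lintegral_indicator measurableSet_closedBall]
    exact ENNReal.add_lt_top.2 ⟨measure_closedBall_lt_top,
      setLIntegral_closedBall_enorm_rpow_neg_lt_top volume (by simpa using hθ1) 0 1⟩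
  refine ⟨(volume (closedBall (0 : ℝ) r) + ∫⁻ y, g y).toNNReal, fun c => ?_⟩
  rw [ENNReal.coe_toNNReal hfinite.ne]
  calc ∫⁻ u in closedBall 0 r, ‖u + c‖ₑ ^ (-θ)
      ≤ ∫⁻ u in closedBall 0 r, (1 + g (u + c)) := lintegral_mono fun u => hpointwise (u + c)
    _ = volume (closedBall (0 : ℝ) r) + ∫⁻ u in closedBall 0 r, g (u + c) := by
        rw [lintegral_add_left measurable_const, setLIntegral_one]
    _ ≤ volume (closedBall (0 : ℝ) r) + ∫⁻ u, g (u + c) := by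
        gcongr
        exact Measure.restrict_le_self
    _ = volume (closedBall (0 : ℝ) r) + ∫⁻ y, g y := by
        rw [lintegral_add_right_eq_self g c]

lemma exists_setLIntegral_prod_enorm_add_rpow_neg_le {θ : ℝ} (hθ0 : 0 ≤ θ) (hθ1 : θ < 1)
    (r : ℝ) :
    ∃ C : ℝ≥0, ∀ c : κ → ℝ,
      ∫⁻ u in closedBall (0 : κ → ℝ) r, ∏ s, ‖u s + c s‖ₑ ^ (-θ) ≤ C := by
  obtain ⟨C, hC⟩ := exists_setLIntegral_enorm_add_rpow_neg_le hθ0 hθ1 r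
  rcases lt_or_ge r 0 with hr | hr
  · exact ⟨0, fun c => by simp only [closedBall_eq_empty.2 hr, Measure.restrict_empty,
      lintegral_zero_measure, zero_le]⟩
  refine ⟨C ^ Fintype.card κ, fun c => ?_⟩
  rw [closedBall_pi _ hr, volume_pi, Measure.restrict_pi_pi,
    lintegral_pi_prod_eq_prod (f := fun s u => ‖u + c s‖ₑ ^ (-θ)) _ fun s => by fun_prop]
  calc ∏ s, ∫⁻ u in closedBall 0 r, ‖u + c s‖ₑ ^ (-θ) ≤ ∏ _s : κ, (C : ℝ≥0∞) :=
        Finset.prod_le_prod' fun s _ => hC (c s)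
    _ = (C ^ Fintype.card κ : ℝ≥0) := by
        rw [Finset.prod_const, Finset.card_univ, ENNReal.coe_pow]

lemma exists_setLIntegral_prod_enorm_mulVec_add_rpow_neg_le [DecidableEq κ] {M : Matrix κ κ ℝ}
    (hM : M.det ≠ 0) {θ : ℝ} (hθ0 : 0 ≤ θ) (hθ1 : θ < 1) (r : ℝ) :
    ∃ C : ℝ≥0, ∀ c : κ → ℝ,
      ∫⁻ t in closedBall 0 r, ∏ s, ‖(M *ᵥ t) s + c s‖ₑ ^ (-θ) ≤ C := by
  obtain ⟨ρ, hρ⟩ : ∃ ρ, Set.MapsTo (M *ᵥ ·) (closedBall 0 r) (closedBall 0 ρ) := by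
    obtain ⟨ρ, hρ⟩ := (((isCompact_closedBall (0 : κ → ℝ) r).image_of_continuousOn
      (Continuous.matrix_mulVec (A := fun _ => M) continuous_const continuous_id).continuousOn)
      |>.isBounded.subset_closedBall 0)
    exact ⟨ρ, Set.mapsTo_iff_image_subset.2 hρ⟩
  obtain ⟨C, hC⟩ := exists_setLIntegral_prod_enorm_add_rpow_neg_le (κ := κ) hθ0 hθ1 ρ
  refine ⟨Real.toNNReal |M.det⁻¹| * C, fun c => ?_⟩
  have hmeas : Measurable fun y : κ → ℝ => ∏ s, ‖y s + c s‖ₑ ^ (-θ) := by fun_prop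
  calc ∫⁻ t in closedBall 0 r, ∏ s, ‖(M *ᵥ t) s + c s‖ₑ ^ (-θ)
      ≤ ∫⁻ t in toLin' M ⁻¹' closedBall 0 ρ, ∏ s, ‖toLin' M t s + c s‖ₑ ^ (-θ) :=
        lintegral_mono_set hρ
    _ = ∫⁻ y in closedBall (0 : κ → ℝ) ρ, ∏ s, ‖y s + c s‖ₑ ^ (-θ) ∂Measure.map (toLin' M) volume :=
        (setLIntegral_map measurableSet_closedBall hmeas
          (toLin' M).continuous_of_finiteDimensional.measurable).symm
    _ = ENNReal.ofReal |M.det⁻¹| * ∫⁻ y in closedBall (0 : κ → ℝ) ρ, ∏ s, ‖y s + c s‖ₑ ^ (-θ) := by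
        rw [Real.map_matrix_volume_pi_eq_smul_volume_pi hM, Measure.restrict_smul,
          lintegral_smul_measure, smul_eq_mul]
    _ ≤ (Real.toNNReal |M.det⁻¹| * C : ℝ≥0) := by
        rw [ENNReal.coe_mul]
        exact mul_le_mul' le_rfl (hC c)

lemma lintegral_pi_le_mul_prod [DecidableEq ι] {α : ι → Type*} [∀ i, MeasurableSpace (α i)]
    [∀ i, Nonempty (α i)] (ν : ∀ i, Measure (α i)) [∀ i, SigmaFinite (ν i)]
    {f : (∀ i, α i) → ℝ≥0∞} (hf : Measurable f) (j : ι) {K : ℝ≥0∞}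
    (hK : ∀ x, ∫⁻ u, f (Function.update x j u) ∂ν j ≤ K) :
    ∫⁻ x, f x ∂Measure.pi ν ≤ K * ∏ i ∈ Finset.univ.erase j, ν i Set.univ := by
  rw [lintegral_eq_lmarginal_univ (Classical.arbitrary _),
    lmarginal_erase' f hf (Finset.mem_univ j)]
  refine (lmarginal_mono (g := fun _ => K) hK _).trans_eq ?_
  rw [lmarginal, lintegral_const, Measure.pi_univ,
    Finset.prod_coe_sort (Finset.univ.erase j) fun i => ν i Set.univ]

lemma prod_enorm_mul_add_rpow_neg {N : ℝ} (hN : N ≠ 0) (θ : ℝ) (y c : κ → ℝ) :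
    ∏ s, ‖N * y s + c s‖ₑ ^ (-θ) =
      (‖N‖ₑ ^ (-θ)) ^ Fintype.card κ * ∏ s, ‖y s + c s / N‖ₑ ^ (-θ) := by
  have hfactor (s : κ) :
      ‖N * y s + c s‖ₑ ^ (-θ) = ‖N‖ₑ ^ (-θ) * ‖y s + c s / N‖ₑ ^ (-θ) := by
    rw [← ENNReal.mul_rpow_of_ne_top enorm_ne_top enorm_ne_top, ← enorm_mul, mul_add,
      mul_div_cancel₀ _ hN]
  simp only [hfactor, Finset.prod_mul_distrib, Finset.prod_const, Finset.card_univ]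

lemma exists_setLIntegral_prod_enorm_sum_mul_mulVec_rpow_neg_le [DecidableEq κ]
    {A : Matrix κ κ ℝ} (hA : A.det ≠ 0) {θ : ℝ} (hθ0 : 0 ≤ θ) (hθ1 : θ < 1) {r : ℝ}
    (hr : 0 ≤ r) :
    ∃ C : ℝ≥0, ∀ (w : μ → ℝ) (j : μ), w j ≠ 0 →
      ∫⁻ x in closedBall (0 : μ → κ → ℝ) r, ∏ s, ‖∑ k, w k * (A *ᵥ x k) s‖ₑ ^ (-θ) ≤
        C * (‖w j‖ₑ ^ (-θ)) ^ Fintype.card κ := by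
  classical
  obtain ⟨C, hC⟩ := exists_setLIntegral_prod_enorm_mulVec_add_rpow_neg_le hA hθ0 hθ1 r
  set V : ℝ≥0∞ := volume (closedBall (0 : κ → ℝ) r) with hV
  have hV_ne_top : V ≠ ⊤ := measure_closedBall_lt_top.ne
  refine ⟨C * V.toNNReal ^ (Fintype.card μ - 1), fun w j hj => ?_⟩
  set K : ℝ≥0∞ := (‖w j‖ₑ ^ (-θ)) ^ Fintype.card κ
  have hslice (x : μ → κ → ℝ) : ∫⁻ u in closedBall 0 r,
      ∏ s, ‖∑ k, w k * (A *ᵥ Function.update x j u k) s‖ₑ ^ (-θ) ≤ K * C := by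
    set c : κ → ℝ := fun s => ∑ k ∈ Finset.univ.erase j, w k * (A *ᵥ x k) s with hc
    have hsplit (u : κ → ℝ) (s : κ) :
        ∑ k, w k * (A *ᵥ Function.update x j u k) s = w j * (A *ᵥ u) s + c s := by
      rw [← Finset.add_sum_erase _ _ (Finset.mem_univ j), Function.update_self, hc]
      congr 1
      refine Finset.sum_congr rfl fun k hk => ?_
      rw [Function.update_of_ne (Finset.ne_of_mem_erase hk)]
    simp only [hsplit, prod_enorm_mul_add_rpow_neg hj]
    rw [lintegral_const_mul _ (by unfold mulVec dotProduct; fun_prop)]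
    exact mul_le_mul' le_rfl (hC _)
  rw [closedBall_pi _ hr, volume_pi, Measure.restrict_pi_pi]
  have hmeas : Measurable fun x : μ → κ → ℝ =>
      ∏ s, ‖∑ k, w k * (A *ᵥ x k) s‖ₑ ^ (-θ) := by
    unfold mulVec dotProduct
    fun_prop
  refine (lintegral_pi_le_mul_prod _ hmeas j hslice).trans_eq ?_
  simp only [Measure.restrict_apply_univ, Pi.zero_apply, ← hV, Finset.prod_const,
    Finset.card_erase_of_mem (Finset.mem_univ j), Finset.card_univ, ENNReal.coe_mul,
    ENNReal.coe_pow, ENNReal.coe_toNNReal hV_ne_top]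
  ring

lemma volume_preserving_curry (μ κ α : Type*) [Fintype μ] [Fintype κ] [MeasureSpace α]
    [SigmaFinite (volume : Measure α)] :
    MeasurePreserving (MeasurableEquiv.curry μ κ α) := by
  have hsymm : MeasurePreserving (MeasurableEquiv.curry μ κ α).symm := by
    refine ⟨(MeasurableEquiv.curry μ κ α).symm.measurable, (Measure.pi_eq fun s _ => ?_).symm⟩
    have hpreimage : (MeasurableEquiv.curry μ κ α).symm ⁻¹' Set.univ.pi s =
        Set.univ.pi fun i => Set.univ.pi fun j => s (i, j) := by
      ext x
      simp only [Set.mem_preimage, Set.mem_univ_pi, Prod.forall]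
      rfl
    rw [MeasurableEquiv.map_apply, hpreimage, volume_pi_pi, Fintype.prod_prod_type]
    simp only [volume_pi_pi]
  exact hsymm.symm

lemma curry_preimage_closedBall {r : ℝ} (hr : 0 ≤ r) :
    MeasurableEquiv.curry μ κ ℝ ⁻¹' closedBall 0 r = closedBall 0 r := by
  ext x
  simp only [Set.mem_preimage, mem_closedBall_zero_iff, pi_norm_le_iff_of_nonneg hr, Prod.forall,
    MeasurableEquiv.coe_curry, Function.curry_apply]

lemma kronecker_mulVec_apply (W : Matrix μ μ ℝ) (A : Matrix κ κ ℝ) (x : μ × κ → ℝ) (i : μ)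
    (s : κ) : ((W ⊗ₖ A) *ᵥ x) (i, s) = ∑ k, W i k * (A *ᵥ Function.curry x k) s := by
  simp only [mulVec, dotProduct, kroneckerMap_apply, Fintype.sum_prod_type, Finset.mul_sum,
    Function.curry_apply, mul_assoc]

lemma prod_min_two_inv_le {θ : ℝ} (hθ0 : 0 ≤ θ) (hθ1 : θ ≤ 1) (g : μ × κ → ℝ≥0∞) (i : μ) :
    ∏ p, min 2 (g p)⁻¹ ≤ 2 ^ Fintype.card (μ × κ) * ∏ s, g (i, s) ^ (-θ) := by
  classical
  calc ∏ p, min 2 (g p)⁻¹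
      ≤ ∏ p : μ × κ, 2 * if p.1 = i then g p ^ (-θ) else 1 := by
        refine Finset.prod_le_prod' fun p _ => ?_
        split_ifs
        · exact min_two_inv_le_two_mul_rpow_neg hθ0 hθ1 (g p)
        · exact (min_le_left _ _).trans_eq (mul_one 2).symm
    _ = 2 ^ Fintype.card (μ × κ) * ∏ s, g (i, s) ^ (-θ) := by
        rw [Finset.prod_mul_distrib, Finset.prod_const, Finset.card_univ, Fintype.prod_prod_type,
          Finset.prod_comm]
        simp only [Fintype.prod_ite_eq']

lemma exists_enorm_setIntegral_eR_sq_le_of_add_transpose_eq_kronecker [DecidableEq κ]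
    {A : Matrix κ κ ℝ} (hA : A.det ≠ 0) {θ : ℝ} (hθ0 : 0 ≤ θ) (hθ1 : θ < 1) :
    ∃ C : ℝ≥0, ∀ (S : Matrix (μ × κ) (μ × κ) ℝ) (W : Matrix μ μ ℝ), S + Sᵀ = W ⊗ₖ A →
      ∀ i j, W i j ≠ 0 → ‖∫ v in closedBall 0 1, eR (v ⬝ᵥ S *ᵥ v)‖ₑ ^ 2 ≤
        C * (‖W i j‖ₑ ^ (-θ)) ^ Fintype.card κ := by
  obtain ⟨C, hC⟩ := exists_setLIntegral_prod_enorm_sum_mul_mulVec_rpow_neg_le (μ := μ) hA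
    hθ0 hθ1 zero_le_two
  refine ⟨2 ^ Fintype.card (μ × κ) * C, fun S W hS i j hij => ?_⟩
  calc ‖∫ v in closedBall 0 1, eR (v ⬝ᵥ S *ᵥ v)‖ₑ ^ 2
      ≤ ∫⁻ x in closedBall 0 2, ∏ p, min 2 ‖((W ⊗ₖ A) *ᵥ x) p‖ₑ⁻¹ := by
        rw [← hS]
        exact enorm_setIntegral_eR_dotProduct_mulVec_sq_le S
    _ ≤ ∫⁻ x in closedBall 0 2, 2 ^ Fintype.card (μ × κ) *
          ∏ s, ‖∑ k, W i k * (A *ᵥ Function.curry x k) s‖ₑ ^ (-θ) :=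
        lintegral_mono fun x => by
          simpa only [kronecker_mulVec_apply] using
            prod_min_two_inv_le hθ0 hθ1.le (fun p => ‖((W ⊗ₖ A) *ᵥ x) p‖ₑ) i
    _ = 2 ^ Fintype.card (μ × κ) * ∫⁻ x in closedBall (0 : μ → κ → ℝ) 2,
          ∏ s, ‖∑ k, W i k * (A *ᵥ x k) s‖ₑ ^ (-θ) := by
        rw [lintegral_const_mul' _ _ (by finiteness),
          ← (volume_preserving_curry μ κ ℝ).setLIntegral_comp_preimage_emb
            (MeasurableEquiv.measurableEmbedding _), curry_preimage_closedBall zero_le_two]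
        rfl
    _ ≤ (2 ^ Fintype.card (μ × κ) * C : ℝ≥0) * (‖W i j‖ₑ ^ (-θ)) ^ Fintype.card κ := by
        push_cast
        rw [mul_assoc]
        exact mul_le_mul' le_rfl (hC (W i) j hij)

lemma dotProduct_kronecker_mulVec (W : Matrix μ μ ℝ) (A : Matrix κ κ ℝ) (v : μ × κ → ℝ) :
    v ⬝ᵥ (W ⊗ₖ A) *ᵥ v =
      ∑ i, ∑ k, W i k * (Function.curry v i ⬝ᵥ A *ᵥ Function.curry v k) := by
  simp only [dotProduct, Fintype.sum_prod_type, kronecker_mulVec_apply, Finset.mul_sum]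
  refine Finset.sum_congr rfl fun i _ => Finset.sum_comm.trans ?_
  refine Finset.sum_congr rfl fun k _ => Finset.sum_congr rfl fun s _ => ?_
  rw [Function.curry_apply]
  ring

variable {m n : ℕ}

/-- The upper triangular matrix with entries `η_{ij}`, `i ≤ j`. It turns the phase of `I(η)` into
the quadratic form of the Kronecker product `upperTriangular η ⊗ₖ A`. -/
def upperTriangular (η : Idx m → ℝ) : Matrix (Fin m) (Fin m) ℝ :=
  of fun i j => if h : i ≤ j then η ⟨(i, j), h⟩ else 0

lemma sum_idx_mul_eq_sum_upperTriangular_mul (η : Idx m → ℝ) (F : Fin m → Fin m → ℝ) :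
    ∑ p, η p * F p.1.1 p.1.2 = ∑ i, ∑ j, upperTriangular η i j * F i j := by
  rw [← Fintype.sum_prod_type' (f := fun i j => upperTriangular η i j * F i j),
    ← Fintype.sum_subtype_add_sum_subtype (fun p : Fin m × Fin m => p.1 ≤ p.2)]
  have hlower (p : {p : Fin m × Fin m // ¬p.1 ≤ p.2}) :
      upperTriangular η p.1.1 p.1.2 * F p.1.1 p.1.2 = 0 := by
    rw [upperTriangular, of_apply, dif_neg p.2, zero_mul]
  simp only [hlower, Finset.sum_const_zero, add_zero]
  refine Finset.sum_congr rfl fun p _ => ?_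
  rw [upperTriangular, of_apply, dif_pos p.2]

lemma abs_le_abs_upperTriangular_add_transpose (η : Idx m → ℝ) (p : Idx m) :
    |η p| ≤ |(upperTriangular η + (upperTriangular η)ᵀ) p.1.1 p.1.2| := by
  obtain ⟨⟨i, j⟩, hij : i ≤ j⟩ := p
  simp only [Matrix.add_apply, transpose_apply, upperTriangular, of_apply, dif_pos hij]
  rcases hij.eq_or_lt with rfl | hlt
  · rw [dif_pos le_rfl, ← two_mul, abs_mul, abs_two]
    linarith [abs_nonneg (η ⟨(i, i), hij⟩)]
  · rw [dif_neg hlt.not_ge, add_zero]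

lemma quadR_eq_dotProduct (A : Matrix (Fin n) (Fin n) ℤ) (v : Fin m → Fin n → ℝ) (i j : Fin m) :
    quadR A v i j = v i ⬝ᵥ A.map (Int.cast : ℤ → ℝ) *ᵥ v j := by
  simp only [quadR, dotProduct, mulVec, map_apply, Finset.mul_sum, mul_assoc]

lemma Iint_eq_setIntegral_closedBall (A : Matrix (Fin n) (Fin n) ℤ) (η : Idx m → ℝ) :
    Iint A η = ∫ v in closedBall (0 : Fin m × Fin n → ℝ) 1,
      eR (v ⬝ᵥ (upperTriangular η ⊗ₖ A.map (Int.cast : ℤ → ℝ)) *ᵥ v) := by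
  have hbox : (Set.univ.pi fun _ : Fin m => Set.univ.pi fun _ : Fin n => Set.Icc (-1 : ℝ) 1) =
      closedBall 0 1 := by
    simp only [closedBall_pi _ zero_le_one, Pi.zero_apply, Real.closedBall_eq_Icc, zero_sub,
      zero_add]
  rw [Iint, hbox, ← (volume_preserving_curry (Fin m) (Fin n) ℝ).setIntegral_preimage_emb
    (MeasurableEquiv.measurableEmbedding _), curry_preimage_closedBall zero_le_one]
  simp only [dotProduct_kronecker_mulVec, ← quadR_eq_dotProduct,
    sum_idx_mul_eq_sum_upperTriangular_mul]
  rfl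

lemma continuous_Iint (A : Matrix (Fin n) (Fin n) ℤ) :
    Continuous fun η : Idx m → ℝ => Iint A η := by
  refine continuous_parametric_integral_of_continuous
    (f := fun (η : Idx m → ℝ) (v : Fin m → Fin n → ℝ) =>
      eR (∑ p : Idx m, η p * quadR A v p.1.1 p.1.2))
    (continuous_eR.comp ?_)
    (isCompact_univ_pi fun _ => isCompact_univ_pi fun _ => isCompact_Icc)
  unfold quadR
  fun_prop

lemma exists_enorm_Iint_sq_le {A : Matrix (Fin n) (Fin n) ℤ} (hA : A.IsSymm) (hdet : A.det ≠ 0)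
    {θ : ℝ} (hθ0 : 0 ≤ θ) (hθ1 : θ < 1) :
    ∃ C : ℝ≥0, ∀ (η : Idx m → ℝ) (p : Idx m), η p ≠ 0 →
      ‖Iint A η‖ₑ ^ 2 ≤ C * (‖η p‖ₑ ^ (-θ)) ^ n := by
  have hdet' : (A.map (Int.cast : ℤ → ℝ)).det ≠ 0 := by
    rw [← Int.cast_det]
    exact Int.cast_ne_zero.2 hdet
  obtain ⟨C, hC⟩ := exists_enorm_setIntegral_eR_sq_le_of_add_transpose_eq_kronecker
    (μ := Fin m) hdet' hθ0 hθ1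
  refine ⟨C, fun η p hp => ?_⟩
  set U := upperTriangular η
  have hS : U ⊗ₖ A.map (Int.cast : ℤ → ℝ) + (U ⊗ₖ A.map (Int.cast : ℤ → ℝ))ᵀ =
      (U + Uᵀ) ⊗ₖ A.map (Int.cast : ℤ → ℝ) := by
    rw [← kroneckerMap_transpose, ← transpose_map, hA.eq, add_kronecker]
  have hle : ‖η p‖ₑ ≤ ‖(U + Uᵀ) p.1.1 p.1.2‖ₑ :=
    enorm_le_iff_norm_le.2 (abs_le_abs_upperTriangular_add_transpose η p)
  have hne : (U + Uᵀ) p.1.1 p.1.2 ≠ 0 :=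
    enorm_ne_zero.1 ((enorm_pos.2 hp).trans_le hle).ne'
  have hpow : ‖(U + Uᵀ) p.1.1 p.1.2‖ₑ ^ (-θ) ≤ ‖η p‖ₑ ^ (-θ) := by
    rw [ENNReal.rpow_neg, ENNReal.rpow_neg]
    exact ENNReal.inv_le_inv.2 (ENNReal.rpow_le_rpow hle hθ0)
  calc ‖Iint A η‖ₑ ^ 2
      ≤ C * (‖(U + Uᵀ) p.1.1 p.1.2‖ₑ ^ (-θ)) ^ n := by
        rw [Iint_eq_setIntegral_closedBall]
        simpa only [Fintype.card_fin] using hC _ _ hS _ _ hne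
    _ ≤ C * (‖η p‖ₑ ^ (-θ)) ^ n := mul_le_mul' le_rfl (pow_le_pow_left' hpow n)

lemma norm_le_mul_one_add_norm_rpow_neg {E G : Type*} [SeminormedAddCommGroup E]
    [SeminormedAddCommGroup G] {f : E → G} {C D r : ℝ} (hr : 0 ≤ r) (hC : ∀ x, ‖f x‖ ≤ C)
    (hD : ∀ x, 1 ≤ ‖x‖ → ‖f x‖ ≤ D * ‖x‖ ^ (-r)) (x : E) :
    ‖f x‖ ≤ max C D * 2 ^ r * (1 + ‖x‖) ^ (-r) := by
  have hM : 0 ≤ max C D := (norm_nonneg _).trans ((hC 0).trans (le_max_left C D))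
  have hmax : ‖f x‖ ≤ max C D * max 1 ‖x‖ ^ (-r) := by
    rcases le_total 1 ‖x‖ with hx | hx
    · rw [max_eq_right hx]
      exact (hD x hx).trans (by gcongr; exact le_max_right C D)
    · rw [max_eq_left hx, Real.one_rpow, mul_one]
      exact (hC x).trans (le_max_left C D)
  have hdouble : (2 * max 1 ‖x‖) ^ (-r) ≤ (1 + ‖x‖) ^ (-r) :=
    Real.rpow_le_rpow_of_nonpos (by positivity)
      (by linarith [le_max_left 1 ‖x‖, le_max_right 1 ‖x‖]) (neg_nonpos.2 hr)
  calc ‖f x‖ ≤ max C D * max 1 ‖x‖ ^ (-r) := hmax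
    _ = max C D * 2 ^ r * (2 * max 1 ‖x‖) ^ (-r) := by
        rw [Real.mul_rpow zero_le_two (by positivity), Real.rpow_neg zero_le_two]
        field_simp
    _ ≤ max C D * 2 ^ r * (1 + ‖x‖) ^ (-r) := by gcongr

lemma exists_norm_apply_eq_norm {α E : Type*} [Fintype α] [Nonempty α] [SeminormedAddCommGroup E]
    (f : α → E) : ∃ i, ‖f i‖ = ‖f‖ := by
  obtain ⟨i, hi⟩ := Finite.exists_max fun i => ‖f i‖
  exact ⟨i, (norm_le_pi_norm f i).antisymm ((pi_norm_le_iff_of_nonneg (norm_nonneg _)).2 hi)⟩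

lemma exists_norm_Iint_le_norm_rpow_neg {A : Matrix (Fin n) (Fin n) ℤ} (hA : A.IsSymm)
    (hdet : A.det ≠ 0) {r : ℝ} (hr0 : 0 ≤ r) (hrn : 2 * r < n) :
    ∃ D, ∀ η : Idx m → ℝ, η ≠ 0 → ‖Iint A η‖ ≤ D * ‖η‖ ^ (-r) := by
  have hn : (0 : ℝ) < n := by linarith
  obtain ⟨C, hC⟩ := exists_enorm_Iint_sq_le (m := m) hA hdet (θ := 2 * r / n) (by positivity)
    ((div_lt_one hn).2 hrn)
  refine ⟨√C, fun η hη => ?_⟩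
  have : Nonempty (Idx m) := not_isEmpty_iff.1 fun _ => hη (Subsingleton.elim η 0)
  obtain ⟨p, hp⟩ := exists_norm_apply_eq_norm η
  have hp0 : η p ≠ 0 := norm_ne_zero_iff.1 (hp ▸ norm_ne_zero_iff.2 hη)
  have hrhs : C * (‖η p‖ₑ ^ (-(2 * r / n))) ^ n ≠ ⊤ :=
    ENNReal.mul_ne_top ENNReal.coe_ne_top
      (ENNReal.pow_ne_top (ENNReal.rpow_ne_top_of_ne_zero (enorm_ne_zero.2 hp0) enorm_ne_top))
  have hsq : ‖Iint A η‖ ^ 2 ≤ C * (‖η‖ ^ (-(2 * r / n))) ^ n := by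
    simpa only [ENNReal.toReal_mul, ENNReal.toReal_pow, ← ENNReal.toReal_rpow, toReal_enorm,
      ENNReal.coe_toReal, hp] using ENNReal.toReal_mono hrhs (hC η p hp0)
  refine le_of_sq_le_sq ?_ (by positivity)
  calc ‖Iint A η‖ ^ 2 ≤ C * (‖η‖ ^ (-(2 * r / n))) ^ n := hsq
    _ = (√C * ‖η‖ ^ (-r)) ^ 2 := by
        rw [mul_pow, Real.sq_sqrt C.coe_nonneg, ← Real.rpow_mul_natCast (norm_nonneg η),
          ← Real.rpow_mul_natCast (norm_nonneg η)]
        congr 2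
        push_cast
        field_simp

lemma exists_norm_Iint_le {A : Matrix (Fin n) (Fin n) ℤ} (hA : A.IsSymm) (hdet : A.det ≠ 0)
    {r : ℝ} (hr0 : 0 ≤ r) (hrn : 2 * r < n) :
    ∃ C, ∀ η : Idx m → ℝ, ‖Iint A η‖ ≤ C * (1 + ‖η‖) ^ (-r) := by
  obtain ⟨D, hD⟩ := exists_norm_Iint_le_norm_rpow_neg (m := m) hA hdet hr0 hrn
  set V : ℝ := (volume (closedBall (0 : Fin m × Fin n → ℝ) 1)).toReal
  have hV (η : Idx m → ℝ) : ‖Iint A η‖ ≤ V := by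
    rw [Iint_eq_setIntegral_closedBall, ← toReal_enorm]
    exact ENNReal.toReal_mono measure_closedBall_lt_top.ne (enorm_setIntegral_eR_le _ _ _)
  refine ⟨_, norm_le_mul_one_add_norm_rpow_neg hr0 hV fun η hη => hD η ?_⟩
  exact norm_pos_iff.1 (one_pos.trans_le hη)

lemma norm_setIntegral_compl_closedBall_le {E G : Type*} [NormedAddCommGroup E] [NormedSpace ℝ E]
    [FiniteDimensional ℝ E] [MeasurableSpace E] [BorelSpace E] (ν : Measure E)
    [ν.IsAddHaarMeasure] [NormedAddCommGroup G] [NormedSpace ℝ G] {F : E → G} {K r σ Q : ℝ}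
    (hF : ∀ x, ‖F x‖ ≤ K * (1 + ‖x‖) ^ (-r)) (hσ : 0 ≤ σ) (hr : Module.finrank ℝ E + σ < r)
    (hQ : 0 < Q) :
    ‖∫ x in (closedBall 0 Q)ᶜ, F x ∂ν‖ ≤
      K * (∫ x, (1 + ‖x‖) ^ (-(r - σ)) ∂ν) * Q ^ (-σ) := by
  have hK : 0 ≤ K := by simpa using (norm_nonneg _).trans (hF 0)
  have hint : Integrable (fun x => K * Q ^ (-σ) * (1 + ‖x‖) ^ (-(r - σ))) ν :=
    (integrable_one_add_norm (by linarith)).const_mul _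
  have hpointwise : ∀ x ∈ (closedBall 0 Q)ᶜ, ‖F x‖ ≤ K * Q ^ (-σ) * (1 + ‖x‖) ^ (-(r - σ)) := by
    intro x hx
    rw [Set.mem_compl_iff, mem_closedBall_zero_iff, not_le] at hx
    calc ‖F x‖ ≤ K * (1 + ‖x‖) ^ (-r) := hF x
      _ = K * (1 + ‖x‖) ^ (-σ) * (1 + ‖x‖) ^ (-(r - σ)) := by
          rw [mul_assoc, ← Real.rpow_add (by positivity)]
          ring_nf
      _ ≤ K * Q ^ (-σ) * (1 + ‖x‖) ^ (-(r - σ)) := by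
          gcongr ?_ * ?_ * _
          exact Real.rpow_le_rpow_of_nonpos hQ (by linarith) (neg_nonpos.2 hσ)
  calc ‖∫ x in (closedBall 0 Q)ᶜ, F x ∂ν‖
      ≤ ∫ x in (closedBall 0 Q)ᶜ, K * Q ^ (-σ) * (1 + ‖x‖) ^ (-(r - σ)) ∂ν :=
        norm_integral_le_of_norm_le hint.integrableOn
          (ae_restrict_of_forall_mem measurableSet_closedBall.compl hpointwise)
    _ ≤ ∫ x, K * Q ^ (-σ) * (1 + ‖x‖) ^ (-(r - σ)) ∂ν :=
        setIntegral_le_integral hint (Eventually.of_forall fun x => by positivity)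
    _ = K * (∫ x, (1 + ‖x‖) ^ (-(r - σ)) ∂ν) * Q ^ (-σ) := by
        rw [integral_const_mul]
        ring

lemma Jint_sub_JintT_eq_setIntegral_compl {A : Matrix (Fin n) (Fin n) ℤ} {Q : ℝ} (hQ : 0 ≤ Q)
    {c : Idx m → ℝ}
    (hint : Integrable fun η : Idx m → ℝ => Iint A η * eR (-(∑ p : Idx m, η p * c p))) :
    Jint A c - JintT A Q c =
      ∫ η in (closedBall 0 Q)ᶜ, Iint A η * eR (-(∑ p : Idx m, η p * c p)) := by
  rw [setIntegral_compl measurableSet_closedBall hint]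
  simp only [Jint, JintT, closedBall_pi _ hQ, Real.closedBall_eq_Icc, Pi.zero_apply, zero_sub,
    zero_add]

lemma card_idx (m : ℕ) : (Fintype.card (Idx m) : ℝ) = m * (m + 1) / 2 := by
  rw [← Fintype.card_congr (Sym2.sortEquiv (α := Fin m)), Sym2.card, Fintype.card_fin,
    Nat.cast_choose_two]
  push_cast
  ring

lemma le_gamT [NeZero m] {B : Matrix (Fin m) (Fin m) ℤ} (hB : ∀ i, B 0 0 ≤ B i i)
    (hB0 : 2 ≤ B 0 0) : (m : ℝ) ≤ gamT B := by
  have hone (i : Fin m) : 1 ≤ (gamI B i)⁻¹ := by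
    have h0 : (2 : ℝ) ≤ B 0 0 := by exact_mod_cast hB0
    have hi : (B 0 0 : ℝ) ≤ B i i := by exact_mod_cast hB i
    rw [gamI, inv_div, one_le_div (Real.log_pos (by linarith))]
    exact Real.log_le_log (by linarith) hi
  simpa [gamT] using Finset.card_nsmul_le_sum Finset.univ _ 1 fun i _ => hone i

lemma det_ne_zero_of_map_posDef {A : Matrix (Fin n) (Fin n) ℤ}
    (hA : (A.map (Int.cast : ℤ → ℝ)).PosDef) : A.det ≠ 0 := by
  rw [← Int.cast_ne_zero (α := ℝ), Int.cast_det]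
  exact hA.det_pos.ne'

lemma natCast_mul_add_two_lt [NeZero m] {γ x : ℝ} (hγ : m ≤ γ)
    (hx : (2 * γ + m * (m - 1)) * (m * (m + 1) / 2 + 1) < x) : (m : ℝ) * (m + 1) + 2 * 1 < x := by
  have hm : (1 : ℝ) ≤ m := Nat.one_le_cast.2 NeZero.one_le
  have hfactor : (m : ℝ) * (m + 1) ≤ 2 * γ + m * (m - 1) := by linarith
  have htwo : (2 : ℝ) ≤ m * (m + 1) := by nlinarith
  calc (m : ℝ) * (m + 1) + 2 * 1 ≤ m * (m + 1) * 2 := by linarith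
    _ ≤ (2 * γ + m * (m - 1)) * (m * (m + 1) / 2 + 1) :=
        mul_le_mul hfactor (by linarith) zero_le_two (by linarith)
    _ < x := hx

theorem stmt12_general {A : Matrix (Fin n) (Fin n) ℤ} (hA : A.IsSymm) (hdet : A.det ≠ 0)
    {σ : ℝ} (hσ : 0 ≤ σ) (hn : (m : ℝ) * (m + 1) + 2 * σ < n) :
    (∀ c : Idx m → ℝ, Integrable
      fun η : Idx m → ℝ => Iint A η * eR (-(∑ p : Idx m, η p * c p))) ∧
    ∃ K : ℝ, 0 < K ∧ ∀ Q : ℝ, 0 < Q → ∀ c : Idx m → ℝ,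
      ‖Jint A c - JintT A Q c‖ ≤ K * Q ^ (-σ) := by
  obtain ⟨r, hr, hrn⟩ : ∃ r, Fintype.card (Idx m) + σ < r ∧ r < (n : ℝ) / 2 :=
    exists_between (by rw [card_idx]; linarith)
  have hr0 : 0 ≤ r := (add_nonneg (Nat.cast_nonneg _) hσ).trans hr.le
  rw [← Module.finrank_fintype_fun_eq_card ℝ] at hr
  obtain ⟨C, hC⟩ := exists_norm_Iint_le (m := m) hA hdet hr0 (by linarith)
  have hbound (c η : Idx m → ℝ) :
      ‖Iint A η * eR (-(∑ p : Idx m, η p * c p))‖ ≤ C * (1 + ‖η‖) ^ (-r) := by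
    rw [norm_mul, norm_eR, mul_one]
    exact hC η
  have hint (c : Idx m → ℝ) :
      Integrable fun η : Idx m → ℝ => Iint A η * eR (-(∑ p : Idx m, η p * c p)) := by
    refine ((integrable_one_add_norm (by linarith)).const_mul C).mono' ?_
      (Eventually.of_forall (hbound c))
    exact ((continuous_Iint A).mul (continuous_eR.comp (by fun_prop))).aestronglyMeasurable
  refine ⟨hint, max (C * ∫ η : Idx m → ℝ, (1 + ‖η‖) ^ (-(r - σ))) 1,
    lt_max_of_lt_right one_pos, fun Q hQ c => ?_⟩
  rw [Jint_sub_JintT_eq_setIntegral_compl hQ.le (hint c)]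
  refine (norm_setIntegral_compl_closedBall_le volume (hbound c) hσ hr hQ).trans ?_
  gcongr
  exact le_max_left _ _

end SingularIntegral

/-- Lemma 5.3, singular integral convergence. -/
theorem stmt12 (m n : ℕ) [NeZero m] [NeZero n]
    (A : Matrix (Fin n) (Fin n) ℤ) (hAs : A.IsSymm)
    (hApd : (A.map ((↑) : ℤ → ℝ)).PosDef)
    (B : Matrix (Fin m) (Fin m) ℤ) (hBs : B.IsSymm)
    (hBpd : (B.map ((↑) : ℤ → ℝ)).PosDef)
    (hBmono : ∀ i j : Fin m, i ≤ j → B i i ≤ B j j)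
    (hBoff : ∀ i j : Fin m, i < j → |B i j| ≤ B i i)
    (hB11 : 2 ≤ B 0 0)
    (hn : (n : ℝ) > (2 * gamT B + (m : ℝ) * ((m : ℝ) - 1)) *
      ((m : ℝ) * ((m : ℝ) + 1) / 2 + 1)) :
    (∀ c : Idx m → ℝ, MeasureTheory.Integrable
      (fun η : Idx m → ℝ => Iint A η * eR (-(∑ p : Idx m, η p * c p)))) ∧
    ∀ ε : ℝ, 0 < ε → ∃ K : ℝ, 0 < K ∧
      ∀ Q : ℝ, 1 ≤ Q → ∀ c : Idx m → ℝ,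
        ‖Jint A c - JintT A Q c‖ ≤ K * Q ^ (-1 + ε) := by
  obtain ⟨hint, K, hK, htail⟩ := stmt12_general (m := m) hAs (det_ne_zero_of_map_posDef hApd)
    zero_le_one (natCast_mul_add_two_lt (le_gamT (fun i => hBmono 0 i (Fin.zero_le i)) hB11) hn)
  exact ⟨hint, fun ε hε => ⟨K, hK, fun Q hQ c =>
    (htail Q (one_pos.trans_le hQ) c).trans (by gcongr; linarith)⟩⟩
end
end
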